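/- (Godefroy–Shapiro criterion, chaotic part.) Let T be a continuous linear operator on a separable complex Banach space X. Suppose that the linear span of {x ∈ X : Tx = λx for some λ ∈ ℂ with |λ| < 1}, the linear span of {x ∈ X : Tx = λx for some λ ∈ ℂ with |λ| > 1}, and the linear span of {x ∈ X : Tx = e^{απi}x for some rational number α} are all dense in X. Then T is chaotic. -/

import Mathlib

/-- `T` is hypercyclic if some point has dense orbit. -/
def Hypercyclic {Y : Type*} [TopologicalSpace Y] (T : Y → Y) : Prop :=
  ∃ x : Y, Dense (Set.range fun n : ℕ => T^[n] x)

/-- `T` is topologically transitive if every pair of nonempty open sets is connected by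
some iterate of `T`. -/
def TopologicallyTransitive {Y : Type*} [TopologicalSpace Y] (T : Y → Y) : Prop :=
  ∀ U V : Set Y, IsOpen U → IsOpen V → U.Nonempty → V.Nonempty →
    ∃ n : ℕ, (T^[n] '' U ∩ V).Nonempty

/-- `T` is mixing if for every pair of nonempty open sets `U, V` there is `N` such that
`T^[n] '' U` meets `V` for all `n ≥ N`. -/
def IsMixing {Y : Type*} [TopologicalSpace Y] (T : Y → Y) : Prop :=
  ∀ U V : Set Y, IsOpen U → IsOpen V → U.Nonempty → V.Nonempty →
    ∃ N : ℕ, ∀ n ≥ N, (T^[n] '' U ∩ V).Nonempty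

/-- `T` is chaotic if it is topologically transitive and has a dense set of periodic points. -/
def Chaotic {Y : Type*} [TopologicalSpace Y] (T : Y → Y) : Prop :=
  TopologicallyTransitive T ∧ Dense {x : Y | ∃ n : ℕ, 1 ≤ n ∧ T^[n] x = x}

/-!
Eigenvectors with `‖c‖ < 1` have forward orbits tending to `0`, and eigenvectors with `1 < ‖c‖`
have preimages `u n` under `T ^ n` tending to `0`; both properties pass to linear combinations.
If `x` has the first property and `y` the second, then `x + u n` tends to `x` while
`T ^ n (x + u n)` tends to `y`, so `T` is even mixing. Eigenvectors for roots of unity are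
periodic, and sums of periodic points are periodic because two periods have a common multiple.
-/

open Filter Topology

theorem IsMixing.topologicallyTransitive {Y : Type*} [TopologicalSpace Y] {T : Y → Y}
    (hT : IsMixing T) : TopologicallyTransitive T := fun U V hU hV hUne hVne =>
  let ⟨N, hN⟩ := hT U V hU hV hUne hVne
  ⟨N, hN N le_rfl⟩

theorem dense_of_dense_span {R X : Type*} [Semiring R] [AddCommMonoid X] [Module R X]
    [TopologicalSpace X] {s : Set X} {p : Submodule R X}
    (hs : Dense (Submodule.span R s : Set X)) (hsp : s ⊆ p) : Dense (p : Set X) :=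
  hs.mono (SetLike.coe_subset_coe.2 (Submodule.span_le.2 hsp))

section PeriodicPoints

variable {R X : Type*} [Semiring R] [AddCommMonoid X] [Module R X]

/-- The submodule of periodic points of a linear endomorphism. -/
def periodicSubmodule (T : Module.End R X) : Submodule R X where
  carrier := Function.periodicPts T
  zero_mem' := ⟨1, one_pos, map_zero T⟩
  add_mem' := by
    rintro x y ⟨m, hm, hx⟩ ⟨n, hn, hy⟩
    have hx' : (T ^ (m * n)) x = x := (Module.End.pow_apply T _ x).trans (hx.mul_const n)
    have hy' : (T ^ (m * n)) y = y := (Module.End.pow_apply T _ y).trans (hy.const_mul m)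
    refine ⟨m * n, Nat.mul_pos hm hn, ?_⟩
    rw [Function.IsPeriodicPt, Function.IsFixedPt, ← Module.End.pow_apply, map_add, hx', hy']
  smul_mem' := by
    rintro a x ⟨n, hn, hx⟩
    exact ⟨n, hn, hx.map fun z => (map_smul T a z).symm⟩

theorem pow_apply_of_apply_eq_smul {T : Module.End R X} {c : R} {x : X} (hx : T x = c • x)
    (n : ℕ) : (T ^ n) x = c ^ n • x := by
  induction n with
  | zero => simp
  | succ n ih => rw [pow_succ, Module.End.mul_apply, hx, map_smul, ih, smul_smul, pow_succ']

theorem mem_periodicSubmodule_of_isOfFinOrder {T : Module.End R X} {c : R} {x : X}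
    (hc : IsOfFinOrder c) (hx : T x = c • x) : x ∈ periodicSubmodule T := by
  obtain ⟨n, hn, hcn⟩ := hc.exists_pow_eq_one
  refine ⟨n, hn, ?_⟩
  rw [Function.IsPeriodicPt, Function.IsFixedPt, ← Module.End.pow_apply,
    pow_apply_of_apply_eq_smul hx, hcn, one_smul]

end PeriodicPoints

section KitaiCriterion

variable {R X : Type*} [Semiring R] [AddCommMonoid X] [Module R X] [TopologicalSpace X]
  [ContinuousAdd X] [ContinuousConstSMul R X]

/-- The submodule of vectors whose forward orbit tends to `0`. -/
def vanishingOrbitSubmodule (T : Module.End R X) : Submodule R X where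
  carrier := {x | Tendsto (fun n : ℕ => (T ^ n) x) atTop (𝓝 0)}
  zero_mem' := by simp [tendsto_const_nhds]
  add_mem' hx hy := by simpa using hx.add hy
  smul_mem' a x hx := by simpa using hx.const_smul a

/-- The submodule of vectors having, for every `n`, a preimage `u n` under `T ^ n` such that `u n`
tends to `0`. The `u n` are chosen independently of each other: they need not form a backward
orbit. -/
def vanishingPreimagesSubmodule (T : Module.End R X) : Submodule R X where
  carrier := {x | ∃ u : ℕ → X, Tendsto u atTop (𝓝 0) ∧ ∀ n, (T ^ n) (u n) = x}
  zero_mem' := ⟨0, tendsto_const_nhds, fun n => map_zero (T ^ n)⟩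
  add_mem' := by
    rintro x y ⟨u, hu, hux⟩ ⟨v, hv, hvy⟩
    exact ⟨fun n => u n + v n, by simpa using hu.add hv, fun n => by simp [hux, hvy]⟩
  smul_mem' := by
    rintro a x ⟨u, hu, hux⟩
    exact ⟨fun n => a • u n, by simpa using hu.const_smul a, fun n => by simp [hux]⟩

theorem isMixing_of_dense_vanishing {T : Module.End R X}
    (horbit : Dense (vanishingOrbitSubmodule T : Set X))
    (hpreimages : Dense (vanishingPreimagesSubmodule T : Set X)) : IsMixing T := by
  intro U V hU hV hUne hVne
  obtain ⟨x, hx, hxU⟩ := horbit.exists_mem_open hU hUne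
  obtain ⟨y, ⟨u, hu, huy⟩, hyV⟩ := hpreimages.exists_mem_open hV hVne
  have hstart : Tendsto (fun n => x + u n) atTop (𝓝 x) := by
    simpa using hu.const_add x
  have hend : Tendsto (fun n => (T ^ n) (x + u n)) atTop (𝓝 y) := by
    simpa [huy] using Tendsto.add_const y hx
  obtain ⟨N, hN⟩ := eventually_atTop.1
    ((hstart.eventually_mem (hU.mem_nhds hxU)).and (hend.eventually_mem (hV.mem_nhds hyV)))
  refine ⟨N, fun n hn => ⟨(T ^ n) (x + u n), ⟨x + u n, (hN n hn).1, ?_⟩, (hN n hn).2⟩⟩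
  exact (Module.End.pow_apply T n _).symm

end KitaiCriterion

theorem mem_vanishingOrbitSubmodule_of_norm_lt_one {R X : Type*} [SeminormedRing R]
    [AddCommMonoid X] [Module R X] [TopologicalSpace X] [ContinuousAdd X] [ContinuousSMul R X]
    {T : Module.End R X} {c : R} {x : X} (hc : ‖c‖ < 1) (hx : T x = c • x) :
    x ∈ vanishingOrbitSubmodule T := by
  change Tendsto (fun n : ℕ => (T ^ n) x) atTop (𝓝 0)
  simpa only [pow_apply_of_apply_eq_smul hx, zero_smul] using
    (tendsto_pow_atTop_nhds_zero_of_norm_lt_one hc).smul_const x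

section GodefroyShapiro

variable {𝕜 X : Type*} [NormedDivisionRing 𝕜] [AddCommGroup X] [Module 𝕜 X] [TopologicalSpace X]
  [ContinuousAdd X] [ContinuousSMul 𝕜 X]

theorem mem_vanishingPreimagesSubmodule_of_one_lt_norm {T : Module.End 𝕜 X} {c : 𝕜} {x : X}
    (hc : 1 < ‖c‖) (hx : T x = c • x) : x ∈ vanishingPreimagesSubmodule T := by
  have hc₀ : c ≠ 0 := norm_pos_iff.1 (one_pos.trans hc)
  have hcinv : ‖c⁻¹‖ < 1 := by simpa only [norm_inv] using inv_lt_one_of_one_lt₀ hc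
  refine ⟨fun n => c⁻¹ ^ n • x, ?_, fun n => ?_⟩
  · simpa only [zero_smul] using
      (tendsto_pow_atTop_nhds_zero_of_norm_lt_one hcinv).smul_const x
  · rw [map_smul, pow_apply_of_apply_eq_smul hx, smul_smul, inv_pow,
      inv_mul_cancel₀ (pow_ne_zero n hc₀), one_smul]

theorem stmt11_general (T : Module.End 𝕜 X)
    (hlt : Dense (Submodule.span 𝕜 {x : X | ∃ c : 𝕜, ‖c‖ < 1 ∧ T x = c • x} : Set X))
    (hgt : Dense (Submodule.span 𝕜 {x : X | ∃ c : 𝕜, 1 < ‖c‖ ∧ T x = c • x} : Set X))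
    (hroot : Dense
      (Submodule.span 𝕜 {x : X | ∃ c : 𝕜, IsOfFinOrder c ∧ T x = c • x} : Set X)) :
    IsMixing T ∧ Chaotic T := by
  have horbit : Dense (vanishingOrbitSubmodule T : Set X) :=
    dense_of_dense_span hlt fun _ ⟨_, hc, hx⟩ =>
      mem_vanishingOrbitSubmodule_of_norm_lt_one hc hx
  have hpreimages : Dense (vanishingPreimagesSubmodule T : Set X) :=
    dense_of_dense_span hgt fun _ ⟨_, hc, hx⟩ =>
      mem_vanishingPreimagesSubmodule_of_one_lt_norm hc hx
  have hperiodic : Dense (periodicSubmodule T : Set X) :=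
    dense_of_dense_span hroot fun _ ⟨_, hc, hx⟩ =>
      mem_periodicSubmodule_of_isOfFinOrder hc hx
  have hmixing : IsMixing T := isMixing_of_dense_vanishing horbit hpreimages
  exact ⟨hmixing, hmixing.topologicallyTransitive, hperiodic⟩

end GodefroyShapiro

theorem isOfFinOrder_exp_rat_mul_pi_mul_I (α : ℚ) :
    IsOfFinOrder (Complex.exp ((α : ℂ) * Real.pi * Complex.I)) := by
  have harg : (α : ℂ) * Real.pi * Complex.I
      = 2 * Real.pi * Complex.I * ((α / 2 : ℚ) : ℂ) := by
    push_cast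
    ring
  rw [harg]
  exact (Complex.isPrimitiveRoot_exp_rat (α / 2)).isOfFinOrder (α / 2).den_nz

theorem stmt11
    (X : Type*) [NormedAddCommGroup X] [NormedSpace ℂ X] [CompleteSpace X]
    [TopologicalSpace.SeparableSpace X]
    (T : X →L[ℂ] X)
    (hlt : Dense (Submodule.span ℂ {x : X | ∃ c : ℂ, ‖c‖ < 1 ∧ T x = c • x} : Set X))
    (hgt : Dense (Submodule.span ℂ {x : X | ∃ c : ℂ, 1 < ‖c‖ ∧ T x = c • x} : Set X))
    (hroot : Dense (Submodule.span ℂ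
      {x : X | ∃ α : ℚ, T x = Complex.exp ((α : ℂ) * Real.pi * Complex.I) • x} : Set X)) :
    Chaotic ⇑T :=
  (stmt11_general (T : X →ₗ[ℂ] X) hlt hgt <| dense_of_dense_span hroot fun _ ⟨α, hx⟩ =>
    Submodule.subset_span ⟨_, isOfFinOrder_exp_rat_mul_pi_mul_I α, hx⟩).2
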